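/- Let n ≥ 1, let A be an n×n positive semidefinite complex matrix, and let η and η' be partitions of n with η ⊵ η' in the dominance order. Then ∫_{U(n)} ∏_{i=1}^n (Re((u A u*)_{ii}))^{η_i} du ≥ ∫_{U(n)} ∏_{i=1}^n (Re((u A u*)_{ii}))^{η'_i} du, the integrals being over the unitary group U(n) with respect to its Haar probability measure. -/

import Mathlib

open MeasureTheory Matrix
open scoped ComplexOrder

noncomputable instance {n : ℕ} : MeasurableSpace (Matrix.unitaryGroup (Fin n) ℂ) := borel _
instance {n : ℕ} : BorelSpace (Matrix.unitaryGroup (Fin n) ℂ) := ⟨rfl⟩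

/-- conjugation of `A` by the unitary `u` : `u * A * u*` -/
noncomputable def conjU {n : ℕ} (A : Matrix (Fin n) (Fin n) ℂ) (u : Matrix.unitaryGroup (Fin n) ℂ) :
    Matrix (Fin n) (Fin n) ℂ :=
  (u : Matrix (Fin n) (Fin n) ℂ) * A * star (u : Matrix (Fin n) (Fin n) ℂ)

/-- `η` is a partition of `n` with at most `n` parts -/
def IsPartition (n : ℕ) (η : Fin n → ℕ) : Prop := Antitone η ∧ ∑ i, η i = n

/-- dominance order on partitions -/
def Dominates {n : ℕ} (η η' : Fin n → ℕ) : Prop :=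
  ∀ j : Fin n, ∑ i ∈ Finset.Iic j, η' i ≤ ∑ i ∈ Finset.Iic j, η i

/-!
This is Muirhead's inequality for the exchangeable nonnegative random variables
`((u A u*)_{ii}).re`: multiplying `u` on the left by a permutation matrix permutes the diagonal of
`u A u*` and preserves Haar measure. If `η` dominates `η'`, finitely many transfers of one unit
from a coordinate to a smaller one lead from `η` to `η'`, so it is enough to treat one transfer,
between coordinates `i` and `k` say. By exchangeability each integral equals the average of itself
and its image under swapping `i` and `k`, and for these averages the inequality holds pointwise:
it reduces to `x ^ c * y ^ d + y ^ c * x ^ d ≤ x ^ (c + d) + y ^ (c + d)`.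
-/

open ProbabilityTheory

section Transfer

variable {ι : Type*} [DecidableEq ι]

/-- A Robin Hood transfer from `α` to `β`, the elementary step of the dominance order: `d` units
move from position `i` to position `k`. As `ρ` takes the same value `r` at both positions, a
transfer with `i ≠ k` turns the values `r + (c + d)` and `r` of `α` into `r + c` and `r + d`. -/
def IsTransfer (α β : ι → ℕ) : Prop :=
  ∃ (ρ : ι → ℕ) (i k : ι) (c d : ℕ), ρ i = ρ k ∧
    α = ρ + Pi.single i (c + d) ∧ β = ρ + Pi.single i c + Pi.single k d

theorem sum_add_single {M : Type*} [AddCommMonoid M] (s : Finset ι) (γ : ι → M) (i : ι) (m : M) :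
    ∑ l ∈ s, (γ + Pi.single i m : ι → M) l = ∑ l ∈ s, γ l + if i ∈ s then m else 0 := by
  simp only [Pi.add_apply, Finset.sum_add_distrib, Finset.sum_pi_single']

variable [Fintype ι]

theorem IsTransfer.sum_eq {α β : ι → ℕ} (h : IsTransfer α β) : ∑ l, α l = ∑ l, β l := by
  obtain ⟨ρ, i, k, c, d, -, rfl, rfl⟩ := h
  simp only [sum_add_single, Finset.mem_univ, if_true, ← add_assoc]

theorem prod_pow_add_single {M : Type*} [CommMonoid M] (x : ι → M) (γ : ι → ℕ) (i : ι) (m : ℕ) :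
    ∏ l, x l ^ (γ + Pi.single i m : ι → ℕ) l = (∏ l, x l ^ γ l) * x i ^ m := by
  simp only [Pi.add_apply, pow_add, Finset.prod_mul_distrib, Pi.single_apply, pow_ite, pow_zero,
    Finset.prod_ite_eq', Finset.mem_univ, if_true]

theorem pow_mul_pow_add_pow_mul_pow_le {R : Type*} [CommSemiring R] [LinearOrder R]
    [IsStrictOrderedRing R] [ExistsAddOfLE R] {x y : R} (hx : 0 ≤ x) (hy : 0 ≤ y) (c d : ℕ) :
    x ^ c * y ^ d + y ^ c * x ^ d ≤ x ^ (c + d) + y ^ (c + d) := by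
  wlog hxy : x ≤ y generalizing x y
  · simpa only [add_comm] using this hy hx (le_of_not_ge hxy)
  simpa only [pow_add] using
    mul_add_mul_le_mul_add_mul (pow_le_pow_left₀ hx hxy c) (pow_le_pow_left₀ hx hxy d)

theorem prod_pow_transfer_add_swap_le {R : Type*} [CommSemiring R] [LinearOrder R]
    [IsStrictOrderedRing R] [ExistsAddOfLE R] {x : ι → R} (hx : 0 ≤ x) {ρ : ι → ℕ} {i k : ι}
    (hρ : ρ i = ρ k) {α β : ι → ℕ} {c d : ℕ} (hα : α = ρ + Pi.single i (c + d))
    (hβ : β = ρ + Pi.single i c + Pi.single k d) :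
    ∏ l, x l ^ β l + ∏ l, x (Equiv.swap i k l) ^ β l ≤
      ∏ l, x l ^ α l + ∏ l, x (Equiv.swap i k l) ^ α l := by
  have hswap : ∏ l, x (Equiv.swap i k l) ^ ρ l = ∏ l, x l ^ ρ l := by
    rw [← Equiv.prod_comp (Equiv.swap i k) fun l ↦ x l ^ ρ l]
    simp only [Equiv.apply_swap_eq_self hρ]
  simp only [hα, hβ, prod_pow_add_single x, prod_pow_add_single fun l ↦ x (Equiv.swap i k l),
    hswap, Equiv.swap_apply_left, Equiv.swap_apply_right]
  calc (∏ l, x l ^ ρ l) * x i ^ c * x k ^ d + (∏ l, x l ^ ρ l) * x k ^ c * x i ^ d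
      = (∏ l, x l ^ ρ l) * (x i ^ c * x k ^ d + x k ^ c * x i ^ d) := by ring
    _ ≤ (∏ l, x l ^ ρ l) * (x i ^ (c + d) + x k ^ (c + d)) :=
      mul_le_mul_of_nonneg_left (pow_mul_pow_add_pow_mul_pow_le (hx i) (hx k) c d)
        (Finset.prod_nonneg fun l _ ↦ pow_nonneg (hx l) _)
    _ = (∏ l, x l ^ ρ l) * x i ^ (c + d) + (∏ l, x l ^ ρ l) * x k ^ (c + d) := by ring

end Transfer

section Dominance

variable {n : ℕ} {α β : Fin n → ℕ}

theorem Dominates.exists_excess_lt_deficit (hdom : Dominates α β) (hsum : ∑ l, α l = ∑ l, β l)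
    (hne : α ≠ β) : ∃ i k, i < k ∧ β i < α i ∧ α k < β k ∧ ∀ l < k, β l ≤ α l := by
  have hdeficit : ∃ k, α k < β k := by
    by_contra! hle
    have heq := (Finset.sum_eq_sum_iff_of_le fun l _ ↦ hle l).1 hsum.symm
    exact hne (funext fun l ↦ (heq l (Finset.mem_univ l)).symm)
  obtain ⟨k, hk, hmin⟩ := WellFounded.has_min wellFounded_lt {k | α k < β k} hdeficit
  obtain ⟨i, hi, hexcess⟩ : ∃ i ∈ Finset.Iio k, β i < α i := by
    by_contra! hle
    have hlt : ∑ l ∈ Finset.Iic k, α l < ∑ l ∈ Finset.Iic k, β l := by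
      simpa only [← Finset.sum_Iio_add_eq_sum_Iic] using
        add_lt_add_of_le_of_lt (Finset.sum_le_sum hle) hk
    exact hlt.not_ge (hdom k)
  exact ⟨i, k, Finset.mem_Iio.1 hi, hexcess, hk, fun l hl ↦ not_lt.1 fun h ↦ hmin l h hl⟩

theorem Dominates.dominates_of_unit_transfer (hdom : Dominates α β) {ρ : Fin n → ℕ} {i k : Fin n}
    {c : ℕ} (hα : α = ρ + Pi.single i (c + 1)) (hi : β i < α i) (hle : ∀ l < k, β l ≤ α l) :
    Dominates (ρ + Pi.single i c + Pi.single k 1) β := by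
  intro j
  -- Only the partial sums with `i ≤ j < k` decrease, by one, and there the inequality is strict.
  have hsum : ∑ l ∈ Finset.Iic j, α l =
      ∑ l ∈ Finset.Iic j, ρ l + if i ∈ Finset.Iic j then c + 1 else 0 := by
    rw [hα, sum_add_single]
  have hlt (hij : i ≤ j) (hjk : j < k) : ∑ l ∈ Finset.Iic j, β l < ∑ l ∈ Finset.Iic j, α l :=
    Finset.sum_lt_sum (fun l hl ↦ hle l ((Finset.mem_Iic.1 hl).trans_lt hjk))
      ⟨i, Finset.mem_Iic.2 hij, hi⟩
  have hj := hdom j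
  rw [sum_add_single, sum_add_single]
  simp only [Finset.mem_Iic] at hsum ⊢
  split_ifs at hsum ⊢ with hij hkj
  · lia
  · have := hlt hij (not_le.1 hkj)
    lia
  all_goals lia

theorem sum_sum_Iic_add_single_lt (ρ : Fin n → ℕ) {i k : Fin n} (hik : i < k) (c : ℕ) :
    ∑ j, ∑ l ∈ Finset.Iic j, (ρ + Pi.single i c + Pi.single k 1 : Fin n → ℕ) l <
      ∑ j, ∑ l ∈ Finset.Iic j, (ρ + Pi.single i (c + 1) : Fin n → ℕ) l := by
  simp only [sum_add_single, Finset.mem_Iic]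
  refine Finset.sum_lt_sum (fun j _ ↦ ?_) ⟨i, Finset.mem_univ i, by simp [hik.not_ge]⟩
  split_ifs <;> lia

theorem Dominates.exists_isTransfer (hdom : Dominates α β) (hβ : Antitone β)
    (hsum : ∑ l, α l = ∑ l, β l) (hne : α ≠ β) :
    ∃ α', IsTransfer α α' ∧ Dominates α' β ∧
      ∑ j, ∑ l ∈ Finset.Iic j, α' l < ∑ j, ∑ l ∈ Finset.Iic j, α l := by
  obtain ⟨i, k, hik, hi, hk, hle⟩ := hdom.exists_excess_lt_deficit hsum hne
  have hik_le := hβ hik.le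
  obtain ⟨c, hc⟩ : ∃ c, α i = α k + (c + 1) := ⟨α i - α k - 1, by lia⟩
  obtain ⟨ρ, hρ, hα⟩ : ∃ ρ : Fin n → ℕ, ρ i = ρ k ∧ α = ρ + Pi.single i (c + 1) := by
    refine ⟨Function.update α i (α k), by simp [hik.ne'], funext fun l ↦ ?_⟩
    rcases eq_or_ne l i with rfl | hl
    · simpa using hc
    · simp [hl]
  exact ⟨ρ + Pi.single i c + Pi.single k 1, ⟨ρ, i, k, c, 1, hρ, hα, rfl⟩,
    hdom.dominates_of_unit_transfer hα hi hle, hα ▸ sum_sum_Iic_add_single_lt ρ hik c⟩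

theorem Dominates.reflTransGen_isTransfer (hdom : Dominates α β) (hβ : Antitone β)
    (hsum : ∑ l, α l = ∑ l, β l) : Relation.ReflTransGen IsTransfer α β := by
  induction hN : ∑ j, ∑ l ∈ Finset.Iic j, α l using Nat.strong_induction_on generalizing α with
  | _ N ih =>
    rcases eq_or_ne α β with rfl | hne
    · rfl
    obtain ⟨α', htransfer, hdom', hlt⟩ := hdom.exists_isTransfer hβ hsum hne
    exact .head htransfer (ih _ (hN ▸ hlt) hdom' (htransfer.sum_eq.symm.trans hsum) rfl)

end Dominance

section Muirhead

variable {Ω ι : Type*} [MeasurableSpace Ω] {μ : Measure Ω}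

/-- Exchangeability of a family of random variables, the symmetry behind Muirhead's inequality for
mixed moments: permuting the family does not change its joint law. -/
def Exchangeable {E : Type*} [MeasurableSpace E] (X : Ω → ι → E) (μ : Measure Ω) : Prop :=
  ∀ σ : Equiv.Perm ι, IdentDistrib (fun ω i ↦ X ω (σ i)) X μ μ

variable [Fintype ι]

theorem Exchangeable.identDistrib_prod_pow {X : Ω → ι → ℝ} (hX : Exchangeable X μ)
    (γ : ι → ℕ) (σ : Equiv.Perm ι) :
    IdentDistrib (fun ω ↦ ∏ i, X ω (σ i) ^ γ i) (fun ω ↦ ∏ i, X ω i ^ γ i) μ μ :=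
  (hX σ).comp (u := fun x : ι → ℝ ↦ ∏ i, x i ^ γ i) (by fun_prop)

theorem Exchangeable.integral_prod_pow_le_of_isTransfer [DecidableEq ι] {X : Ω → ι → ℝ}
    (hX : Exchangeable X μ) (hnonneg : 0 ≤ᵐ[μ] X)
    (hint : ∀ γ : ι → ℕ, Integrable (fun ω ↦ ∏ i, X ω i ^ γ i) μ)
    {α β : ι → ℕ} (h : IsTransfer α β) :
    ∫ ω, ∏ i, X ω i ^ β i ∂μ ≤ ∫ ω, ∏ i, X ω i ^ α i ∂μ := by
  obtain ⟨ρ, i, k, c, d, hρ, hα, hβ⟩ := h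
  let σ := Equiv.swap i k
  have hintσ (γ : ι → ℕ) : Integrable (fun ω ↦ ∏ i, X ω (σ i) ^ γ i) μ :=
    (hX.identDistrib_prod_pow γ σ).integrable_iff.2 (hint γ)
  have hsymm (γ : ι → ℕ) :
      ∫ ω, (∏ i, X ω i ^ γ i + ∏ i, X ω (σ i) ^ γ i) ∂μ = 2 * ∫ ω, ∏ i, X ω i ^ γ i ∂μ := by
    rw [integral_add (hint γ) (hintσ γ), (hX.identDistrib_prod_pow γ σ).integral_eq, two_mul]
  have hle : ∫ ω, (∏ i, X ω i ^ β i + ∏ i, X ω (σ i) ^ β i) ∂μ ≤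
      ∫ ω, (∏ i, X ω i ^ α i + ∏ i, X ω (σ i) ^ α i) ∂μ :=
    integral_mono_ae ((hint β).add (hintσ β)) ((hint α).add (hintσ α))
      (hnonneg.mono fun _ hω ↦ prod_pow_transfer_add_swap_le hω hρ hα hβ)
  rw [hsymm, hsymm] at hle
  exact le_of_mul_le_mul_left hle two_pos

theorem Exchangeable.integral_prod_pow_le_of_dominates {n : ℕ} {X : Ω → Fin n → ℝ}
    (hX : Exchangeable X μ) (hnonneg : 0 ≤ᵐ[μ] X)
    (hint : ∀ γ : Fin n → ℕ, Integrable (fun ω ↦ ∏ i, X ω i ^ γ i) μ)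
    {α β : Fin n → ℕ} (hβ : Antitone β) (hsum : ∑ l, α l = ∑ l, β l) (hdom : Dominates α β) :
    ∫ ω, ∏ i, X ω i ^ β i ∂μ ≤ ∫ ω, ∏ i, X ω i ^ α i ∂μ := by
  have htransfers := hdom.reflTransGen_isTransfer hβ hsum
  clear hsum hdom
  induction htransfers using Relation.ReflTransGen.head_induction_on with
  | refl => rfl
  | head h _ ih => exact ih.trans (hX.integral_prod_pow_le_of_isTransfer hnonneg hint h)

end Muirhead

section Unitary

variable {ι : Type*} [Fintype ι] [DecidableEq ι]

instance compactSpace_unitaryGroup {𝕜 : Type*} [RCLike 𝕜] :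
    CompactSpace (Matrix.unitaryGroup ι 𝕜) := by
  have hcompact : IsCompact (Set.univ.pi fun _ : ι ↦ Set.univ.pi fun _ : ι ↦
      Metric.closedBall (0 : 𝕜) 1) :=
    isCompact_univ_pi fun _ ↦ isCompact_univ_pi fun _ ↦ isCompact_closedBall _ _
  exact isCompact_iff_compactSpace.1 <|
    hcompact.of_isClosed_subset (isClosed_unitary (R := Matrix ι ι 𝕜))
      fun U hU i _ j _ ↦ mem_closedBall_zero_iff.2 (entry_norm_bound_of_unitary hU i j)

theorem permMatrix_mem_unitaryGroup {R : Type*} [CommRing R] [StarRing R] (σ : Equiv.Perm ι) :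
    σ.permMatrix R ∈ Matrix.unitaryGroup ι R := by
  rw [mem_unitaryGroup_iff, star_eq_conjTranspose, conjTranspose_permMatrix, ← permMatrix_mul,
    inv_mul_cancel, permMatrix_one]

variable {n : ℕ}

theorem re_diag_conjU_nonneg {A : Matrix (Fin n) (Fin n) ℂ} (hA : A.PosSemidef)
    (u : Matrix.unitaryGroup (Fin n) ℂ) :
    0 ≤ fun i ↦ (conjU A u i i).re :=
  fun _ ↦ (Complex.le_def.1 (hA.mul_mul_conjTranspose_same _).diag_nonneg).1

variable (A : Matrix (Fin n) (Fin n) ℂ)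

theorem continuous_conjU : Continuous (conjU A) := by
  unfold conjU
  fun_prop

theorem continuous_re_diag_conjU : Continuous fun u i ↦ (conjU A u i i).re :=
  continuous_pi fun i ↦ Complex.continuous_re.comp ((continuous_conjU A).matrix_elem i i)

theorem conjU_permMatrix_mul (σ : Equiv.Perm (Fin n)) (u : Matrix.unitaryGroup (Fin n) ℂ) :
    conjU A (⟨σ.permMatrix ℂ, permMatrix_mem_unitaryGroup σ⟩ * u) = (conjU A u).submatrix σ σ := by
  calc conjU A (⟨σ.permMatrix ℂ, permMatrix_mem_unitaryGroup σ⟩ * u)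
      = σ.permMatrix ℂ * conjU A u * (σ⁻¹).permMatrix ℂ := by
        simp only [conjU, Submonoid.coe_mul, star_mul, Matrix.mul_assoc,
          star_eq_conjTranspose (σ.permMatrix ℂ), conjTranspose_permMatrix]
    _ = (conjU A u).submatrix σ σ := by
        rw [PEquiv.toMatrix_toPEquiv_mul, PEquiv.mul_toMatrix_toPEquiv, submatrix_submatrix]
        rfl

variable (μ : Measure (Matrix.unitaryGroup (Fin n) ℂ))

theorem exchangeable_re_diag_conjU [μ.IsMulLeftInvariant] :
    Exchangeable (fun u i ↦ (conjU A u i i).re) μ := by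
  intro σ
  let P : Matrix.unitaryGroup (Fin n) ℂ := ⟨σ.permMatrix ℂ, permMatrix_mem_unitaryGroup σ⟩
  have hmeas := (continuous_re_diag_conjU A).measurable
  have hP : IdentDistrib (P * ·) id μ μ :=
    ⟨(measurable_const_mul P).aemeasurable, aemeasurable_id, by
      rw [map_mul_left_eq_self, Measure.map_id]⟩
  have hcomp := hP.comp hmeas
  simpa only [Function.comp_def, id_eq, P, conjU_permMatrix_mul, submatrix_apply] using hcomp

theorem integrable_prod_re_diag_conjU_pow [IsFiniteMeasure μ] (γ : Fin n → ℕ) :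
    Integrable (fun u ↦ ∏ i, (conjU A u i i).re ^ γ i) μ := by
  have hcont : Continuous fun u ↦ ∏ i, (conjU A u i i).re ^ γ i :=
    continuous_finsetProd _ fun i _ ↦ (continuous_pi_iff.1 (continuous_re_diag_conjU A) i).pow _
  exact hcont.integrable_of_hasCompactSupport (.of_compactSpace _)

end Unitary

theorem stmt1_general {n : ℕ} (μ : Measure (Matrix.unitaryGroup (Fin n) ℂ))
    [μ.IsMulLeftInvariant] [IsFiniteMeasure μ]
    {A : Matrix (Fin n) (Fin n) ℂ} (hA : A.PosSemidef)
    {η η' : Fin n → ℕ} (hη' : Antitone η') (hsum : ∑ i, η i = ∑ i, η' i)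
    (hdom : Dominates η η') :
    ∫ u, ∏ i, ((conjU A u) i i).re ^ η' i ∂μ ≤
      ∫ u, ∏ i, ((conjU A u) i i).re ^ η i ∂μ :=
  (exchangeable_re_diag_conjU A μ).integral_prod_pow_le_of_dominates
    (.of_forall (re_diag_conjU_nonneg hA)) (integrable_prod_re_diag_conjU_pow A μ) hη' hsum hdom

theorem stmt1 (n : ℕ) (hn : 1 ≤ n)
    (μ : Measure (Matrix.unitaryGroup (Fin n) ℂ))
    [μ.IsMulLeftInvariant] [IsProbabilityMeasure μ]
    (A : Matrix (Fin n) (Fin n) ℂ) (hA : A.PosSemidef)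
    (η η' : Fin n → ℕ) (hη : IsPartition n η) (hη' : IsPartition n η')
    (hdom : Dominates η η') :
    ∫ u, ∏ i, ((conjU A u) i i).re ^ η' i ∂μ ≤
      ∫ u, ∏ i, ((conjU A u) i i).re ^ η i ∂μ := by
  exact stmt1_general μ hA hη'.1 (hη.2.trans hη'.2.symm) hdom
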